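/- Let X ~ N(m, Σ) be a Gaussian random vector on ℝ^n with Σ symmetric positive definite, let W ~ N(0, R) on ℝ^m with R symmetric positive definite be independent of X, let H be an m×n matrix, Y := HX + W, and K := ΣHᵀ(HΣHᵀ+R)⁻¹. Then for P_Y-almost every y, the conditional distribution of X given Y = y is the Gaussian N(m + K(y − Hm), Σ − ΣHᵀ(HΣHᵀ+R)⁻¹HΣ). -/

import Mathlib

open MeasureTheory ProbabilityTheory Matrix
open scoped Matrix ENNReal

/-- The multivariate Gaussian measure `N(m, Σ)` on `ℝ^n`, defined through its density
with respect to Lebesgue measure. -/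
noncomputable def mvGaussian {n : ℕ} (m : Fin n → ℝ) (S : Matrix (Fin n) (Fin n) ℝ) :
    Measure (Fin n → ℝ) :=
  volume.withDensity fun x =>
    ENNReal.ofReal ((Real.sqrt ((2 * Real.pi) ^ n * S.det))⁻¹ *
      Real.exp (-(1 / 2) * ((x - m) ⬝ᵥ (S⁻¹).mulVec (x - m))))

/-! Conditioning is Bayes' formula for densities. The pair `(Y, X)` is a shear of `(X, W)`, so its
density at `(y, x)` is `p_X(x) p_W(y - Hx)`. Completing the square in `x` rewrites this as
`p_Y(y) q_y(x)`, where `p_Y` is the density of `N(Hm, HΣHᵀ + R)` and `q_y` that of the claimed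
posterior. Each `q_y` has mass one, so `q_y` is the conditional density. -/

section Density

variable {Ω β G : Type*} [MeasurableSpace Ω] [MeasurableSpace β] [MeasurableSpace G]

lemma map_withDensity_comp {μ : Measure β} {g : β → G} {f : G → ℝ≥0∞} (hg : Measurable g)
    (hf : Measurable f) : (μ.withDensity fun x => f (g x)).map g = (μ.map g).withDensity f := by
  ext s hs
  rw [Measure.map_apply hg hs, withDensity_apply _ (hg hs), withDensity_apply _ hs,
    setLIntegral_map hs hf hg]

lemma measurePreserving_add_shear [AddGroup G] [MeasurableAdd₂ G] (ν : Measure β) (ρ : Measure G)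
    [SFinite ν] [SFinite ρ] [ρ.IsAddRightInvariant] {φ : β → G} (hφ : Measurable φ) :
    MeasurePreserving (fun q : β × G => (q.2 + φ q.1, q.1)) (ν.prod ρ) (ρ.prod ν) :=
  Measure.measurePreserving_swap.comp <| (MeasurePreserving.id ν).skew_product
    (g := fun x w => w + φ x) (by fun_prop) <| .of_forall fun x => map_add_right_eq_self ρ (φ x)

/-- With `φ` the signal and `W` the noise, the likelihood of `y` given `x` is `fW (y - φ x)`. -/
lemma map_add_prodMk_eq_withDensity [AddGroup G] [MeasurableAdd₂ G] [MeasurableNeg G]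
    {P : Measure Ω} [IsFiniteMeasure P] {ν : Measure β} {ρ : Measure G} [SFinite ν] [SFinite ρ]
    [ρ.IsAddRightInvariant] {X : Ω → β} {W : Ω → G} (hX : Measurable X) (hW : Measurable W)
    (hindep : IndepFun X W P) {fX : β → ℝ≥0∞} {fW : G → ℝ≥0∞} (hfX : Measurable fX)
    (hfW : Measurable fW) (hXlaw : P.map X = ν.withDensity fX)
    (hWlaw : P.map W = ρ.withDensity fW) {φ : β → G} (hφ : Measurable φ) :
    P.map (fun ω => (W ω + φ (X ω), X ω))
      = (ρ.prod ν).withDensity fun q => fX q.2 * fW (q.1 - φ q.2) := by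
  have hshear := measurePreserving_add_shear ν ρ hφ
  calc P.map (fun ω => (W ω + φ (X ω), X ω))
      = (P.map fun ω => (X ω, W ω)).map fun q => (q.2 + φ q.1, q.1) := by
        rw [Measure.map_map hshear.measurable (hX.prodMk hW)]; rfl
    _ = ((ν.prod ρ).withDensity fun q => fX q.1 * fW q.2).map fun q => (q.2 + φ q.1, q.1) := by
        rw [(indepFun_iff_map_prod_eq_prod_map_map hX.aemeasurable hW.aemeasurable).1 hindep,
          hXlaw, hWlaw, prod_withDensity hfX hfW]
    _ = (ρ.prod ν).withDensity fun q => fX q.2 * fW (q.1 - φ q.2) := by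
        rw [← hshear.map_eq, ← map_withDensity_comp hshear.measurable (by fun_prop)]
        simp only [add_sub_cancel_right]

lemma condDistrib_ae_eq_withDensity [StandardBorelSpace β] [Nonempty β] {P : Measure Ω}
    [IsFiniteMeasure P] {ρ : Measure G} {ν : Measure β} [SFinite ρ] [SFinite ν]
    {X : Ω → β} {Y : Ω → G} (hX : AEMeasurable X P) {f : G → ℝ≥0∞} {g : G → β → ℝ≥0∞}
    (hf : Measurable f) (hg : Measurable (Function.uncurry g)) (hmass : ∀ y, ∫⁻ x, g y x ∂ν = 1)
    (hjoint : P.map (fun ω => (Y ω, X ω)) = (ρ.prod ν).withDensity fun q => f q.1 * g q.1 q.2) :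
    ∀ᵐ y ∂(P.map Y), condDistrib X Y P y = ν.withDensity (g y) := by
  let κ : Kernel G β := (Kernel.const G ν).withDensity g
  have hκ (y : G) : κ y = ν.withDensity (g y) := Kernel.withDensity_apply _ hg y
  have : IsMarkovKernel κ := ⟨fun y => ⟨by simp [hκ, hmass]⟩⟩
  have hcompProd : P.map (fun ω => (Y ω, X ω)) = ρ.withDensity f ⊗ₘ κ := by
    rw [hjoint, Measure.compProd_withDensity hg, Measure.compProd_const, prod_withDensity_left hf]
    exact withDensity_mul _ (hf.comp measurable_fst) hg
  have hY : P.map Y = ρ.withDensity f := by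
    rw [← Measure.fst_map_prodMk₀ hX, hcompProd, Measure.fst_compProd]
  filter_upwards [condDistrib_ae_eq_of_measure_eq_compProd Y hX (hY ▸ hcompProd)] with y hy
  rw [hy, hκ]

end Density

section QuadraticForm

variable {ι κ α : Type*} [Fintype ι] [Fintype κ] [CommRing α]

lemma dotProduct_mulVec_comm_of_isSymm {A : Matrix ι ι α} (hA : A.IsSymm) (u w : ι → α) :
    u ⬝ᵥ A *ᵥ w = w ⬝ᵥ A *ᵥ u := by
  rw [dotProduct_mulVec, ← mulVec_transpose, hA.eq, dotProduct_comm]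

lemma sub_dotProduct_mulVec_sub {A : Matrix ι ι α} (hA : A.IsSymm) (u w : ι → α) :
    (u - w) ⬝ᵥ A *ᵥ (u - w) = u ⬝ᵥ A *ᵥ u - 2 * (u ⬝ᵥ A *ᵥ w) + w ⬝ᵥ A *ᵥ w := by
  simp only [mulVec_sub, dotProduct_sub, sub_dotProduct, dotProduct_mulVec_comm_of_isSymm hA w u]
  ring

lemma dotProduct_transpose_mul_mulVec (H : Matrix κ ι α) (A : Matrix κ κ α) (u : ι → α)
    (v : κ → α) : u ⬝ᵥ (Hᵀ * A) *ᵥ v = (H *ᵥ u) ⬝ᵥ A *ᵥ v := by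
  rw [← mulVec_mulVec, dotProduct_mulVec u, vecMul_transpose]

end QuadraticForm

section KalmanAlgebra

variable {ι κ α : Type*} [Fintype ι] [Fintype κ] [DecidableEq κ] [CommRing α]

/-- The covariance `H Σ Hᵀ + R` of the observation `Y = HX + W`, called innovation covariance in
filtering; `S` stands for `Σ`. -/
def innovationCov (S : Matrix ι ι α) (H : Matrix κ ι α) (R : Matrix κ κ α) : Matrix κ κ α :=
  H * S * Hᵀ + R

/-- The Kalman gain `K = Σ Hᵀ (H Σ Hᵀ + R)⁻¹`. -/
noncomputable def kalmanGain (S : Matrix ι ι α) (H : Matrix κ ι α) (R : Matrix κ κ α) :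
    Matrix ι κ α :=
  S * Hᵀ * (innovationCov S H R)⁻¹

/-- The posterior covariance `Σ - K H Σ`, with the Kalman gain `K` written out. -/
noncomputable def posteriorCov (S : Matrix ι ι α) (H : Matrix κ ι α) (R : Matrix κ κ α) :
    Matrix ι ι α :=
  S - S * Hᵀ * (innovationCov S H R)⁻¹ * H * S

variable {S : Matrix ι ι α} {H : Matrix κ ι α} {R : Matrix κ κ α}

lemma mul_kalmanGain (hT : IsUnit (innovationCov S H R).det) :
    H * kalmanGain S H R = 1 - R * (innovationCov S H R)⁻¹ := by
  have h : H * S * Hᵀ = innovationCov S H R - R := by rw [innovationCov, add_sub_cancel_right]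
  rw [kalmanGain, ← Matrix.mul_assoc, ← Matrix.mul_assoc, h, Matrix.sub_mul, mul_nonsing_inv _ hT]

variable [DecidableEq ι]

lemma precision_mul_kalmanGain (hS : IsUnit S.det) (hR : IsUnit R.det)
    (hT : IsUnit (innovationCov S H R).det) :
    (S⁻¹ + Hᵀ * R⁻¹ * H) * kalmanGain S H R = Hᵀ * R⁻¹ := by
  have hpush : (S⁻¹ + Hᵀ * R⁻¹ * H) * (S * Hᵀ) = Hᵀ * R⁻¹ * innovationCov S H R := by
    rw [innovationCov, Matrix.add_mul, Matrix.mul_add, nonsing_inv_mul_cancel_left _ _ hS,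
      nonsing_inv_mul_cancel_right _ _ hR, add_comm]
    simp only [Matrix.mul_assoc]
  rw [kalmanGain, ← Matrix.mul_assoc, hpush, mul_nonsing_inv_cancel_right _ _ hT]

lemma inv_posteriorCov (hS : IsUnit S.det) (hR : IsUnit R.det)
    (hT : IsUnit (innovationCov S H R).det) :
    (posteriorCov S H R)⁻¹ = S⁻¹ + Hᵀ * R⁻¹ * H := by
  refine inv_eq_left_inv ?_
  calc (S⁻¹ + Hᵀ * R⁻¹ * H) * posteriorCov S H R
      = (S⁻¹ + Hᵀ * R⁻¹ * H) * S - (S⁻¹ + Hᵀ * R⁻¹ * H) * kalmanGain S H R * (H * S) := by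
        simp only [posteriorCov, kalmanGain, Matrix.mul_sub, Matrix.mul_assoc]
    _ = 1 := by
        rw [precision_mul_kalmanGain hS hR hT, Matrix.add_mul, nonsing_inv_mul _ hS,
          Matrix.mul_assoc _ H S, add_sub_cancel_right]

/-- Both sides are Schur expansions of `det [[S, S * Hᵀ], [H * S, H * S * Hᵀ + R]]`, the joint
covariance of `(X, Y)`. -/
lemma det_mul_det_eq_det_innovationCov_mul_det_posteriorCov (hS : IsUnit S.det)
    (hT : IsUnit (innovationCov S H R).det) :
    S.det * R.det = (innovationCov S H R).det * (posteriorCov S H R).det := by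
  let := S.invertibleOfIsUnitDet hS
  let := (innovationCov S H R).invertibleOfIsUnitDet hT
  have h₁ := det_fromBlocks₁₁ S (S * Hᵀ) (H * S) (innovationCov S H R)
  have h₂ := det_fromBlocks₂₂ S (S * Hᵀ) (H * S) (innovationCov S H R)
  have hschur : innovationCov S H R - H * S * S⁻¹ * (S * Hᵀ) = R := by
    rw [mul_nonsing_inv_cancel_right _ _ hS, ← Matrix.mul_assoc, innovationCov,
      add_sub_cancel_left]
  rw [invOf_eq_nonsing_inv, hschur] at h₁
  rw [invOf_eq_nonsing_inv, ← Matrix.mul_assoc _ H S] at h₂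
  exact h₁.symm.trans h₂

lemma dotProduct_add_dotProduct_eq_completeSquare (hS : IsUnit S.det) (hR : IsUnit R.det)
    (hT : IsUnit (innovationCov S H R).det) (hSsymm : S.IsSymm) (hRsymm : R.IsSymm)
    (u : ι → α) (v : κ → α) :
    u ⬝ᵥ S⁻¹ *ᵥ u + (v - H *ᵥ u) ⬝ᵥ R⁻¹ *ᵥ (v - H *ᵥ u)
      = v ⬝ᵥ (innovationCov S H R)⁻¹ *ᵥ v
        + (u - kalmanGain S H R *ᵥ v) ⬝ᵥ (posteriorCov S H R)⁻¹ *ᵥ (u - kalmanGain S H R *ᵥ v) := by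
  have hprec : (posteriorCov S H R)⁻¹ = S⁻¹ + Hᵀ * R⁻¹ * H := inv_posteriorCov hS hR hT
  have hprecSymm : (posteriorCov S H R)⁻¹.IsSymm := by
    simp only [hprec, IsSymm, transpose_add, transpose_mul, transpose_transpose, hSsymm.inv.eq,
      hRsymm.inv.eq, Matrix.mul_assoc]
  have hprecGain : (posteriorCov S H R)⁻¹ *ᵥ kalmanGain S H R *ᵥ v = (Hᵀ * R⁻¹) *ᵥ v := by
    rw [hprec, mulVec_mulVec, precision_mul_kalmanGain hS hR hT]
  have hquad : u ⬝ᵥ (posteriorCov S H R)⁻¹ *ᵥ u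
      = u ⬝ᵥ S⁻¹ *ᵥ u + (H *ᵥ u) ⬝ᵥ R⁻¹ *ᵥ (H *ᵥ u) := by
    rw [hprec, add_mulVec, dotProduct_add, ← mulVec_mulVec, dotProduct_transpose_mul_mulVec]
  have hgain : (kalmanGain S H R *ᵥ v) ⬝ᵥ (Hᵀ * R⁻¹) *ᵥ v
      = v ⬝ᵥ R⁻¹ *ᵥ v - v ⬝ᵥ (innovationCov S H R)⁻¹ *ᵥ v := by
    rw [dotProduct_transpose_mul_mulVec, mulVec_mulVec, mul_kalmanGain hT, sub_mulVec, one_mulVec,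
      sub_dotProduct, dotProduct_mulVec_comm_of_isSymm hRsymm.inv (_ *ᵥ v), mulVec_mulVec,
      nonsing_inv_mul_cancel_left _ _ hR]
  rw [sub_dotProduct_mulVec_sub hRsymm.inv, sub_dotProduct_mulVec_sub hprecSymm, hprecGain, hquad,
    hgain, dotProduct_transpose_mul_mulVec, dotProduct_mulVec_comm_of_isSymm hRsymm.inv v (H *ᵥ u)]
  ring

end KalmanAlgebra

section PosDef

variable {ι κ : Type*} [Fintype ι] {S : Matrix ι ι ℝ} {R : Matrix κ κ ℝ}

lemma posDef_innovationCov [Finite κ] (hS : S.PosSemidef) (hR : R.PosDef) (H : Matrix κ ι ℝ) :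
    (innovationCov S H R).PosDef := by
  simpa [innovationCov] using hR.posSemidef_add (hS.mul_mul_conjTranspose_same H)

lemma posDef_posteriorCov [Fintype κ] [DecidableEq κ] (hS : S.PosDef) (hR : R.PosDef)
    (H : Matrix κ ι ℝ) : (posteriorCov S H R).PosDef := by
  classical
  have hT := posDef_innovationCov hS.posSemidef hR H
  rw [← posDef_inv_iff, inv_posteriorCov hS.det_pos.ne'.isUnit hR.det_pos.ne'.isUnit
    hT.det_pos.ne'.isUnit]
  simpa using hS.inv.add_posSemidef (hR.inv.posSemidef.conjTranspose_mul_mul_same H)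

end PosDef

section GaussianDensity

lemma lintegral_exp_neg_half_dotProduct_self (ι : Type*) [Fintype ι] :
    ∫⁻ x : ι → ℝ, ENNReal.ofReal (Real.exp (-(1 / 2) * (x ⬝ᵥ x)))
      = ENNReal.ofReal √((2 * Real.pi) ^ Fintype.card ι) := by
  have hprod (x : ι → ℝ) :
      Real.exp (-(1 / 2) * (x ⬝ᵥ x)) = ∏ i, Real.exp (-(1 / 2) * x i ^ 2) := by
    rw [← Real.exp_sum, dotProduct, Finset.mul_sum]
    simp only [pow_two]
  have hint : Integrable fun t : ℝ => Real.exp (-(1 / 2) * t ^ 2) :=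
    integrable_exp_neg_mul_sq (by norm_num)
  have hsqrt : √((2 * Real.pi) ^ Fintype.card ι) = √(2 * Real.pi) ^ Fintype.card ι := by
    rw [Real.sqrt_eq_iff_eq_sq (by positivity) (by positivity), pow_right_comm,
      Real.sq_sqrt (by positivity)]
  have hpi : Real.pi / (1 / 2) = 2 * Real.pi := by ring
  simp only [hprod]
  rw [volume_pi, ← ofReal_integral_eq_lintegral_ofReal (.fintype_prod fun _ => hint)
      (.of_forall fun x => by positivity), ← volume_pi,
    integral_fintype_prod_volume_eq_pow fun t : ℝ => Real.exp (-(1 / 2) * t ^ 2),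
    integral_gaussian, hpi, hsqrt]

variable {ι κ : Type*} [Fintype ι] [DecidableEq ι] [Fintype κ] [DecidableEq κ]

/-- The real-valued Lebesgue density of `N(m, S)` on `ℝ^ι`. As for `mvGaussian`, the formula is
meaningful for positive definite `S` only. -/
noncomputable def mvGaussianPDFReal (m : ι → ℝ) (S : Matrix ι ι ℝ) (x : ι → ℝ) : ℝ :=
  (√((2 * Real.pi) ^ Fintype.card ι * S.det))⁻¹ *
    Real.exp (-(1 / 2) * ((x - m) ⬝ᵥ S⁻¹ *ᵥ (x - m)))

/-- The density `mvGaussianPDFReal` as a function to `ℝ≥0∞`, to be used with `withDensity`. -/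
noncomputable def mvGaussianPDF (m : ι → ℝ) (S : Matrix ι ι ℝ) (x : ι → ℝ) : ℝ≥0∞ :=
  ENNReal.ofReal (mvGaussianPDFReal m S x)

lemma mvGaussian_eq_withDensity_mvGaussianPDF {n : ℕ} (m : Fin n → ℝ)
    (S : Matrix (Fin n) (Fin n) ℝ) : mvGaussian m S = volume.withDensity (mvGaussianPDF m S) :=
  congrArg volume.withDensity <| funext fun x => by
    simp only [mvGaussianPDF, mvGaussianPDFReal, Fintype.card_fin]

lemma mvGaussianPDFReal_nonneg (m : ι → ℝ) (S : Matrix ι ι ℝ) (x : ι → ℝ) :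
    0 ≤ mvGaussianPDFReal m S x := by
  unfold mvGaussianPDFReal; positivity

lemma measurable_mvGaussianPDF {β : Type*} [MeasurableSpace β] (S : Matrix ι ι ℝ)
    {m x : β → ι → ℝ} (hm : Measurable m) (hx : Measurable x) :
    Measurable fun b => mvGaussianPDF (m b) S (x b) := by
  have hcont : Continuous fun q : (ι → ℝ) × (ι → ℝ) => mvGaussianPDFReal q.1 S q.2 := by
    unfold mvGaussianPDFReal; fun_prop
  exact (hcont.measurable.comp (hm.prodMk hx)).ennreal_ofReal

open scoped MatrixOrder Matrix.Norms.L2Operator in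
lemma exists_eq_transpose_mul_self_of_posDef {A : Matrix ι ι ℝ} (hA : A.PosDef) :
    ∃ B : Matrix ι ι ℝ, B.det ≠ 0 ∧ A = Bᵀ * B := by
  obtain ⟨B, hB, hAB⟩ :=
    CStarAlgebra.isStrictlyPositive_iff_eq_star_mul_self.mp hA.isStrictlyPositive
  exact ⟨B, ((isUnit_iff_isUnit_det B).1 hB).ne_zero, by simpa [star_eq_conjTranspose] using hAB⟩

lemma lintegral_comp_mulVec {B : Matrix ι ι ℝ} (hB : B.det ≠ 0) {f : (ι → ℝ) → ℝ≥0∞}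
    (hf : Measurable f) : ∫⁻ x, f (B *ᵥ x) = ENNReal.ofReal |B.det⁻¹| * ∫⁻ x, f x := by
  rw [← smul_eq_mul, ← lintegral_smul_measure, ← Real.map_matrix_volume_pi_eq_smul_volume_pi hB,
    lintegral_map hf (by fun_prop)]
  rfl

lemma lintegral_exp_neg_half_dotProduct_mulVec {A : Matrix ι ι ℝ} (hA : A.PosDef) :
    ∫⁻ x : ι → ℝ, ENNReal.ofReal (Real.exp (-(1 / 2) * (x ⬝ᵥ A *ᵥ x)))
      = ENNReal.ofReal √((2 * Real.pi) ^ Fintype.card ι * A.det⁻¹) := by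
  obtain ⟨B, hB, rfl⟩ := exists_eq_transpose_mul_self_of_posDef hA
  simp only [dotProduct_transpose_mul_mulVec]
  rw [lintegral_comp_mulVec hB (f := fun x => ENNReal.ofReal (Real.exp (-(1 / 2) * (x ⬝ᵥ x))))
      (by fun_prop),
    lintegral_exp_neg_half_dotProduct_self, ← ENNReal.ofReal_mul (abs_nonneg _), det_mul,
    det_transpose, ← sq, ← inv_pow, Real.sqrt_mul (by positivity), Real.sqrt_sq_eq_abs, mul_comm]

lemma lintegral_mvGaussianPDF (m : ι → ℝ) {S : Matrix ι ι ℝ} (hS : S.PosDef) :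
    ∫⁻ x, mvGaussianPDF m S x = 1 := by
  have hdet := hS.det_pos
  simp only [mvGaussianPDF, mvGaussianPDFReal]
  rw [lintegral_sub_right_eq_self (fun x => ENNReal.ofReal
      ((√((2 * Real.pi) ^ Fintype.card ι * S.det))⁻¹ * Real.exp (-(1 / 2) * (x ⬝ᵥ S⁻¹ *ᵥ x)))) m]
  simp only [ENNReal.ofReal_mul (inv_nonneg.2 (Real.sqrt_nonneg _))]
  rw [lintegral_const_mul _ (by fun_prop), lintegral_exp_neg_half_dotProduct_mulVec hS.inv,
    det_nonsing_inv, Ring.inverse_eq_inv', inv_inv, ← ENNReal.ofReal_mul (by positivity),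
    inv_mul_cancel₀ (by positivity), ENNReal.ofReal_one]

lemma mvGaussianPDFReal_mul_mvGaussianPDFReal_sub_mulVec {S : Matrix ι ι ℝ} {R : Matrix κ κ ℝ}
    (hS : S.PosDef) (hR : R.PosDef) (H : Matrix κ ι ℝ) (m x : ι → ℝ) (y : κ → ℝ) :
    mvGaussianPDFReal m S x * mvGaussianPDFReal 0 R (y - H *ᵥ x)
      = mvGaussianPDFReal (H *ᵥ m) (innovationCov S H R) y *
        mvGaussianPDFReal (m + kalmanGain S H R *ᵥ (y - H *ᵥ m)) (posteriorCov S H R) x := by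
  have hT := posDef_innovationCov hS.posSemidef hR H
  have hSdet : IsUnit S.det := hS.det_pos.ne'.isUnit
  have hTdet : IsUnit (innovationCov S H R).det := hT.det_pos.ne'.isUnit
  have hnorm : (√((2 * Real.pi) ^ Fintype.card ι * S.det))⁻¹ *
        (√((2 * Real.pi) ^ Fintype.card κ * R.det))⁻¹
      = (√((2 * Real.pi) ^ Fintype.card κ * (innovationCov S H R).det))⁻¹ *
        (√((2 * Real.pi) ^ Fintype.card ι * (posteriorCov S H R).det))⁻¹ := by
    have hdet := det_mul_det_eq_det_innovationCov_mul_det_posteriorCov (R := R) hSdet hTdet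
    have hSpos := hS.det_pos
    have hTpos := hT.det_pos
    rw [← mul_inv, ← mul_inv, ← Real.sqrt_mul (by positivity), ← Real.sqrt_mul (by positivity)]
    congr 2
    linear_combination (2 * Real.pi) ^ Fintype.card ι * (2 * Real.pi) ^ Fintype.card κ * hdet
  have hsq := dotProduct_add_dotProduct_eq_completeSquare hSdet hR.det_pos.ne'.isUnit hTdet
    (isHermitian_iff_isSymm.1 hS.isHermitian) (isHermitian_iff_isSymm.1 hR.isHermitian)
    (x - m) (y - H *ᵥ m)
  have hres : y - H *ᵥ m - H *ᵥ (x - m) = y - H *ᵥ x := by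
    rw [mulVec_sub, sub_sub_sub_cancel_right]
  rw [hres] at hsq
  simp only [mvGaussianPDFReal, sub_zero, ← sub_sub x m]
  rw [mul_mul_mul_comm, hnorm, ← Real.exp_add, ← mul_add, hsq, mul_add, Real.exp_add,
    mul_mul_mul_comm]

lemma mvGaussianPDF_mul_mvGaussianPDF_sub_mulVec {S : Matrix ι ι ℝ} {R : Matrix κ κ ℝ}
    (hS : S.PosDef) (hR : R.PosDef) (H : Matrix κ ι ℝ) (m x : ι → ℝ) (y : κ → ℝ) :
    mvGaussianPDF m S x * mvGaussianPDF 0 R (y - H *ᵥ x)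
      = mvGaussianPDF (H *ᵥ m) (innovationCov S H R) y *
        mvGaussianPDF (m + kalmanGain S H R *ᵥ (y - H *ᵥ m)) (posteriorCov S H R) x := by
  simp only [mvGaussianPDF, ← ENNReal.ofReal_mul (mvGaussianPDFReal_nonneg _ _ _),
    mvGaussianPDFReal_mul_mvGaussianPDFReal_sub_mulVec hS hR]

end GaussianDensity

/-- **The Gaussian posterior of the linear Gaussian model.**
If `X ~ N(m, Σ)` on `ℝ^n`, `W ~ N(0, R)` on `ℝ^m` independent of `X`, and `Y = HX + W`,
then for `P_Y`-a.e. `y` the conditional distribution of `X` given `Y = y` is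
`N(m + K(y − Hm), Σ − Σ Hᵀ (H Σ Hᵀ + R)⁻¹ H Σ)` with `K = Σ Hᵀ (H Σ Hᵀ + R)⁻¹`. -/
theorem gaussian_posterior {n p : ℕ} {Ω : Type*} [MeasurableSpace Ω]
    (P : Measure Ω) [IsProbabilityMeasure P]
    (X : Ω → Fin n → ℝ) (W : Ω → Fin p → ℝ)
    (hXm : Measurable X) (hWm : Measurable W)
    (m : Fin n → ℝ) (S : Matrix (Fin n) (Fin n) ℝ) (R : Matrix (Fin p) (Fin p) ℝ)
    (hS : S.PosDef) (hR : R.PosDef)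
    (hXlaw : P.map X = mvGaussian m S) (hWlaw : P.map W = mvGaussian 0 R)
    (hindep : IndepFun X W P)
    (H : Matrix (Fin p) (Fin n) ℝ)
    (Y : Ω → Fin p → ℝ) (hY : Y = fun ω => H.mulVec (X ω) + W ω)
    (K : Matrix (Fin n) (Fin p) ℝ) (hK : K = S * Hᵀ * (H * S * Hᵀ + R)⁻¹) :
    ∀ᵐ y ∂(P.map Y),
      condDistrib X Y P y
        = mvGaussian (m + K.mulVec (y - H.mulVec m))
            (S - S * Hᵀ * (H * S * Hᵀ + R)⁻¹ * H * S) := by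
  subst hY hK
  have hjoint := map_add_prodMk_eq_withDensity hXm hWm hindep
    (measurable_mvGaussianPDF S measurable_const measurable_id)
    (measurable_mvGaussianPDF R measurable_const measurable_id)
    (hXlaw.trans (mvGaussian_eq_withDensity_mvGaussianPDF m S))
    (hWlaw.trans (mvGaussian_eq_withDensity_mvGaussianPDF 0 R))
    (φ := fun x => H *ᵥ x) (by fun_prop)
  simp only [id, mvGaussianPDF_mul_mvGaussianPDF_sub_mulVec hS hR, add_comm (W _)] at hjoint
  simp only [mvGaussian_eq_withDensity_mvGaussianPDF]
  exact condDistrib_ae_eq_withDensity hXm.aemeasurable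
    (measurable_mvGaussianPDF _ measurable_const measurable_id)
    (measurable_mvGaussianPDF _ (by fun_prop) measurable_snd)
    (fun y => lintegral_mvGaussianPDF _ (posDef_posteriorCov hS hR H)) hjoint
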